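/- Let Y, X, Z be random vectors in ℝ^p, ℝ^q, ℝ^r forming a Markov chain Y → X → Z, and let l : ℝ^p × ℝ^p → [0,∞) be a Borel loss function. Assume there exists a Borel-measurable f : ℝ^q → ℝ^p attaining L*_l(Y|X) = E[l(Y,f(X))], and a measurable σ² : ℝ^p → [0,∞) with E[σ²(Y)] < ∞ such that for P_{Y,Z}-almost every (y,z) the random variable l(y, f(X)) is σ²(y)-sub-Gaussian under P_{X|Z=z} and under P_{X|Z=z,Y=y}. If additionally I(X;Y) < ∞, then L*_l(Y|Z) − L*_l(Y|X) ≤ √( 2 E[σ²(Y)] · (I(X;Y) − I(Z;Y)) ). -/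

import Mathlib

open MeasureTheory ProbabilityTheory Topology
open scoped ENNReal

noncomputable section

/-- Minimum expected risk `L*_l(Y|X)` of estimating `Y` from `X` under the loss `l`:
the infimum over Borel-measurable estimators `f` of `E[l(Y, f(X))]`. -/
def minRisk {Ω : Type*} [MeasurableSpace Ω] (μ : Measure Ω) {p q : ℕ}
    (l : (Fin p → ℝ) → (Fin p → ℝ) → ℝ) (Y : Ω → Fin p → ℝ) (X : Ω → Fin q → ℝ) : ℝ≥0∞ :=
  ⨅ (f : (Fin q → ℝ) → Fin p → ℝ) (_ : Measurable f),
    ∫⁻ ω, ENNReal.ofReal (l (Y ω) (f (X ω))) ∂μ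

open Classical in
/-- Kullback–Leibler divergence with values in `ℝ≥0∞`: it equals `∫ log (dP/dQ) dP` when
`P ≪ Q` and the log-density is `P`-integrable, and `∞` otherwise. -/
def klDiv {β : Type*} [MeasurableSpace β] (P Q : Measure β) : ℝ≥0∞ :=
  if P ≪ Q ∧ Integrable (fun x => Real.log (P.rnDeriv Q x).toReal) P then
    ENNReal.ofReal (∫ x, Real.log (P.rnDeriv Q x).toReal ∂P)
  else ⊤

/-- Mutual information `I(U;V) = D_KL(P_{U,V} ‖ P_U ⊗ P_V)` of two random variables. -/
def mutualInfo {Ω 𝒰 𝒱 : Type*} [MeasurableSpace Ω] [MeasurableSpace 𝒰] [MeasurableSpace 𝒱]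
    (μ : Measure Ω) (U : Ω → 𝒰) (V : Ω → 𝒱) : ℝ≥0∞ :=
  klDiv (μ.map fun ω => (U ω, V ω)) ((μ.map U).prod (μ.map V))

/-- `W` is `s2`-sub-Gaussian under the measure `ν`: `W` has finite mean and
`log E[exp (t (W - E[W]))] ≤ s2 t² / 2` for every real `t`. -/
def SubGaussian {β : Type*} [MeasurableSpace β] (ν : Measure β) (W : β → ℝ)
    (s2 : ℝ) : Prop :=
  Integrable W ν ∧
    ∀ t : ℝ, Real.log (∫ x, Real.exp (t * (W x - ∫ x', W x' ∂ν)) ∂ν) ≤ s2 * t ^ 2 / 2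


theorem klDiv_eq_informationTheory_klDiv {β : Type*} [MeasurableSpace β] (P Q : Measure β)
    [IsProbabilityMeasure P] [IsProbabilityMeasure Q] :
    klDiv P Q = InformationTheory.klDiv P Q := by
  by_cases h : P ≪ Q ∧ Integrable (llr P Q) P
  · rw [InformationTheory.klDiv_of_ac_of_integrable h.1 h.2]
    refine (if_pos h).trans ?_
    simp [llr]
  · refine (if_neg h).trans ?_
    exact (not_not.mp fun h' => h (InformationTheory.klDiv_ne_top_iff.mp h')).symm

/-- One-sided Donsker–Varadhan inequality that does not presuppose integrability of `a`. -/
theorem lintegral_ofReal_le_integral_add_klDiv {β : Type*} [MeasurableSpace β] {P Q : Measure β}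
    [IsProbabilityMeasure P] [IsProbabilityMeasure Q] (hPQ : InformationTheory.klDiv P Q ≠ ⊤)
    {a b : β → ℝ} (ha : Measurable a) (hb : Measurable b) (ha0 : ∀ x, 0 ≤ a x)
    (hbi : Integrable b P)
    (hexp : ∫⁻ x, ENNReal.ofReal (Real.exp (a x - b x)) ∂Q ≤ 1) :
    ∫⁻ x, ENNReal.ofReal (a x) ∂P
      ≤ ENNReal.ofReal (∫ x, b x ∂P + (InformationTheory.klDiv P Q).toReal) := by
  obtain ⟨hac, hllr⟩ := InformationTheory.klDiv_ne_top_iff.mp hPQ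
  set w : β → ℝ := fun x => Real.exp (a x - b x) * (Q.rnDeriv P x).toReal with hw
  have hw0 : ∀ x, 0 ≤ w x := fun x => by positivity
  have hwm : Measurable w := by fun_prop
  have hw1 : ∫⁻ x, ENNReal.ofReal (w x) ∂P ≤ 1 := by
    calc ∫⁻ x, ENNReal.ofReal (w x) ∂P
        ≤ ∫⁻ x, Q.rnDeriv P x * ENNReal.ofReal (Real.exp (a x - b x)) ∂P := by
          refine lintegral_mono fun x => ?_
          rw [hw]
          simp only
          rw [mul_comm, ENNReal.ofReal_mul ENNReal.toReal_nonneg]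
          gcongr
          exact ENNReal.ofReal_toReal_le
      _ ≤ ∫⁻ x, ENNReal.ofReal (Real.exp (a x - b x)) ∂Q := by
          refine (lintegral_withDensity_eq_lintegral_mul P (Measure.measurable_rnDeriv Q P)
            (by fun_prop)).symm.trans_le ?_
          exact lintegral_mono' (Measure.withDensity_rnDeriv_le Q P) le_rfl
      _ ≤ 1 := hexp
  have hwi : Integrable w P := by
    refine ⟨hwm.aestronglyMeasurable, ?_⟩
    rw [hasFiniteIntegral_iff_ofReal (Filter.Eventually.of_forall hw0)]
    exact hw1.trans_lt ENNReal.one_lt_top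
  have hwint : ∫ x, w x ∂P ≤ 1 := by
    rw [integral_eq_lintegral_of_nonneg_ae (Filter.Eventually.of_forall hw0)
      hwm.aestronglyMeasurable]
    exact ENNReal.toReal_le_of_le_ofReal zero_le_one (by simpa using hw1)
  have key : ∀ᵐ x ∂P, a x ≤ b x + llr P Q x + (w x - 1) := by
    filter_upwards [Measure.rnDeriv_pos hac, hac.ae_le (Measure.rnDeriv_lt_top P Q),
      Measure.inv_rnDeriv hac] with x hpos hlt hinv
    have hr : 0 < (P.rnDeriv Q x).toReal := ENNReal.toReal_pos hpos.ne' hlt.ne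
    have hq : (Q.rnDeriv P x).toReal = (P.rnDeriv Q x).toReal⁻¹ := by
      rw [← hinv]; simp
    have hwx : w x = Real.exp (a x - b x) * (P.rnDeriv Q x).toReal⁻¹ := by rw [hw]; simp [hq]
    have hlog := Real.log_le_sub_one_of_pos (x := w x) (by rw [hwx]; positivity)
    rw [hwx, Real.log_mul (Real.exp_ne_zero _) (inv_ne_zero hr.ne'), Real.log_exp,
      Real.log_inv, ← hwx] at hlog
    simp only [llr]
    linarith
  have hbl : Integrable (fun x => b x + llr P Q x) P := hbi.add hllr
  have hw1i : Integrable (fun x => w x - 1) P := hwi.sub (integrable_const _)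
  have hri : Integrable (fun x => b x + llr P Q x + (w x - 1)) P := hbl.add hw1i
  calc ∫⁻ x, ENNReal.ofReal (a x) ∂P
      ≤ ∫⁻ x, ENNReal.ofReal (b x + llr P Q x + (w x - 1)) ∂P :=
        lintegral_mono_ae (key.mono fun x hx => ENNReal.ofReal_le_ofReal hx)
    _ = ENNReal.ofReal (∫ x, (b x + llr P Q x + (w x - 1)) ∂P) :=
        (ofReal_integral_eq_lintegral_ofReal hri
          (key.mono fun x hx => (ha0 x).trans hx)).symm
    _ ≤ _ := by
        refine ENNReal.ofReal_le_ofReal ?_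
        rw [integral_add hbl hw1i, integral_add hbi hllr, integral_sub hwi (integrable_const _),
          InformationTheory.toReal_klDiv_of_measure_eq hac (by simp)]
        simp only [integral_const, probReal_univ, smul_eq_mul, mul_one]
        linarith

theorem le_sqrt_of_forall_mul_le {c V D : ℝ} (hV : 0 ≤ V) (hD : 0 ≤ D)
    (h : ∀ s : ℝ, 0 < s → s * c ≤ s ^ 2 * V / 2 + D) : c ≤ Real.sqrt (2 * V * D) := by
  rcases le_or_gt c 0 with hc | hc
  · exact hc.trans (Real.sqrt_nonneg _)
  refine Real.le_sqrt_of_sq_le ?_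
  have hd : discrim (V / 2) (-c) D ≤ 0 := by
    refine discrim_le_zero fun s => ?_
    rcases le_or_gt s 0 with hs | hs
    · have := mul_nonneg_of_nonpos_of_nonpos hs (neg_nonpos.mpr hc.le)
      nlinarith [mul_nonneg hV (mul_self_nonneg s)]
    · nlinarith [h s hs]
  rw [discrim] at hd
  linarith

/-- Randomised estimators do no better than deterministic ones. -/
theorem minRisk_le_lintegral_kernel {Ω : Type*} [MeasurableSpace Ω] (μ : Measure Ω) [SFinite μ]
    {p r : ℕ} {𝒳 : Type*} [MeasurableSpace 𝒳] [StandardBorelSpace 𝒳] [Nonempty 𝒳]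
    {l : (Fin p → ℝ) → (Fin p → ℝ) → ℝ}
    (hl : Measurable fun yy : (Fin p → ℝ) × (Fin p → ℝ) => l yy.1 yy.2)
    {Y : Ω → Fin p → ℝ} {Z : Ω → Fin r → ℝ} (hY : Measurable Y) (hZ : Measurable Z)
    (κ : Kernel (Fin r → ℝ) 𝒳) [IsMarkovKernel κ] {f : 𝒳 → Fin p → ℝ} (hf : Measurable f) :
    minRisk μ l Y Z ≤ ∫⁻ ω, ∫⁻ x, ENNReal.ofReal (l (Y ω) (f x)) ∂(κ (Z ω)) ∂μ := by
  obtain ⟨F, hF, hFκ⟩ := κ.exists_measurable_map_eq_unitInterval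
  have hl' : Measurable fun q : Ω × unitInterval =>
      ENNReal.ofReal (l (Y q.1) (f (F (Z q.1) q.2))) := by
    have : Measurable fun q : Ω × unitInterval => F (Z q.1) q.2 :=
      hF.comp ((hZ.comp measurable_fst).prodMk measurable_snd)
    exact (hl.comp ((hY.comp measurable_fst).prodMk (hf.comp this))).ennreal_ofReal
  calc minRisk μ l Y Z
      = ∫⁻ _u : unitInterval, minRisk μ l Y Z := by simp
    _ ≤ ∫⁻ u : unitInterval, ∫⁻ ω, ENNReal.ofReal (l (Y ω) (f (F (Z ω) u))) ∂μ :=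
        lintegral_mono fun u => iInf₂_le (fun z => f (F z u))
          (hf.comp (hF.comp (measurable_id.prodMk measurable_const)))
    _ = ∫⁻ ω, (∫⁻ u : unitInterval, ENNReal.ofReal (l (Y ω) (f (F (Z ω) u)))) ∂μ :=
        (lintegral_lintegral_swap hl'.aemeasurable).symm
    _ = _ := by
        refine lintegral_congr fun ω => ?_
        rw [← hFκ, lintegral_map]
        · exact (hl.comp (measurable_const.prodMk hf)).ennreal_ofReal
        · exact hF.of_uncurry_left

section MutualInformation

variable {Ω 𝒳 𝒴 𝒵 : Type*} [MeasurableSpace Ω]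
  [MeasurableSpace 𝒳] [StandardBorelSpace 𝒳] [Nonempty 𝒳] [MeasurableSpace 𝒴]
  [MeasurableSpace 𝒵] [StandardBorelSpace 𝒵] [Nonempty 𝒵]
  {μ : Measure Ω} [IsProbabilityMeasure μ] {X : Ω → 𝒳} {Y : Ω → 𝒴} {Z : Ω → 𝒵}

theorem map_prod_compProd_prodMkRight_condDistrib (hX : Measurable X) (hY : Measurable Y)
    (hZ : Measurable Z) :
    (((μ.map X).prod (μ.map Y)) ⊗ₘ (condDistrib Z X μ).prodMkRight 𝒴).map
        (fun q => ((q.2, q.1.2), q.1.1))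
      = ((μ.map Z).prod (μ.map Y)) ⊗ₘ (condDistrib X Z μ).prodMkRight 𝒴 := by
  have := Measure.isProbabilityMeasure_map hX.aemeasurable (μ := μ)
  have := Measure.isProbabilityMeasure_map hY.aemeasurable (μ := μ)
  have := Measure.isProbabilityMeasure_map hZ.aemeasurable (μ := μ)
  refine Measure.ext_of_lintegral _ fun g hg => ?_
  have hX' (y : 𝒴) : ∫⁻ x, ∫⁻ z, g ((z, y), x) ∂(condDistrib Z X μ x) ∂(μ.map X)
      = ∫⁻ ω, g ((Z ω, y), X ω) ∂μ := by
    rw [← Measure.lintegral_compProd (f := fun q : 𝒳 × 𝒵 => g ((q.2, y), q.1)) (by fun_prop),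
      compProd_map_condDistrib hZ.aemeasurable, lintegral_map (by fun_prop) (by fun_prop)]
  have hZ' (y : 𝒴) : ∫⁻ z, ∫⁻ x, g ((z, y), x) ∂(condDistrib X Z μ z) ∂(μ.map Z)
      = ∫⁻ ω, g ((Z ω, y), X ω) ∂μ := by
    rw [← Measure.lintegral_compProd (f := fun q : 𝒵 × 𝒳 => g ((q.1, y), q.2)) (by fun_prop),
      compProd_map_condDistrib hX.aemeasurable, lintegral_map (by fun_prop) (by fun_prop)]
  have hm1 : Measurable fun q : 𝒳 × 𝒴 =>
      ∫⁻ z, g ((z, q.2), q.1) ∂((condDistrib Z X μ).prodMkRight 𝒴 q) :=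
    Measurable.lintegral_kernel_prod_right
      (f := fun (q : 𝒳 × 𝒴) z => g ((z, q.2), q.1)) (by fun_prop)
  have hm2 : Measurable fun q : 𝒵 × 𝒴 =>
      ∫⁻ x, g (q, x) ∂((condDistrib X Z μ).prodMkRight 𝒴 q) :=
    Measurable.lintegral_kernel_prod_right (f := fun (q : 𝒵 × 𝒴) x => g (q, x)) (by fun_prop)
  rw [lintegral_map hg (by fun_prop), Measure.lintegral_compProd (by fun_prop),
    Measure.lintegral_compProd hg, lintegral_prod_symm' _ hm1, lintegral_prod_symm' _ hm2]
  simp only [Kernel.prodMkRight_apply, hX', hZ']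

/-- For a Markov chain `Y → X → Z`, the conditional mutual information of `X` and `Y` given `Z`
is at most `I(X;Y) - I(Z;Y)`. -/
theorem mutualInfo_add_klDiv_le_of_condIndepFun [StandardBorelSpace Ω] [StandardBorelSpace 𝒴]
    [Nonempty 𝒴] (hX : Measurable X) (hY : Measurable Y) (hZ : Measurable Z)
    (hMarkov : CondIndepFun (MeasurableSpace.comap X inferInstance) hX.comap_le Y Z μ) :
    mutualInfo μ Z Y + InformationTheory.klDiv (μ.map fun ω => ((Z ω, Y ω), X ω))
        ((μ.map fun ω => (Z ω, Y ω)) ⊗ₘ (condDistrib X Z μ).prodMkRight 𝒴)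
      ≤ mutualInfo μ X Y := by
  have := Measure.isProbabilityMeasure_map hX.aemeasurable (μ := μ)
  have := Measure.isProbabilityMeasure_map hY.aemeasurable (μ := μ)
  have := Measure.isProbabilityMeasure_map hZ.aemeasurable (μ := μ)
  have hXY := Measure.isProbabilityMeasure_map (hX.prodMk hY).aemeasurable (μ := μ)
  have hZY := Measure.isProbabilityMeasure_map (hZ.prodMk hY).aemeasurable (μ := μ)
  have hcond := (condIndepFun_iff_condDistrib_prod_ae_eq_prodMkRight hZ hY hX).mp hMarkov
  rw [mutualInfo, mutualInfo, klDiv_eq_informationTheory_klDiv, klDiv_eq_informationTheory_klDiv,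
    ← compProd_map_condDistrib (X := fun ω => (Z ω, Y ω)) hX.aemeasurable,
    ← InformationTheory.klDiv_compProd_eq_add,
    ← InformationTheory.klDiv_compProd_left (μ.map fun ω => (X ω, Y ω)) _
      ((condDistrib Z X μ).prodMkRight 𝒴),
    ← Measure.compProd_congr hcond, compProd_map_condDistrib hZ.aemeasurable,
    compProd_map_condDistrib hX.aemeasurable, ← map_prod_compProd_prodMkRight_condDistrib hX hY hZ]
  have hmap : (μ.map fun ω => ((Z ω, Y ω), X ω))
      = (μ.map fun ω => ((X ω, Y ω), Z ω)).map (fun q => ((q.2, q.1.2), q.1.1)) := by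
    rw [Measure.map_map (by fun_prop) (by fun_prop)]
    rfl
  rw [hmap]
  exact InformationTheory.klDiv_map_le _ _ (by fun_prop)

end MutualInformation

/-- The lower-tail exponential moment bound only involves an integrand bounded on `W ≥ 0`. -/
theorem SubGaussian.lintegral_exp_lower_le_one {β : Type*} [MeasurableSpace β] {ν : Measure β}
    [IsProbabilityMeasure ν] {W : β → ℝ} {s2 s : ℝ} (h : SubGaussian ν W s2)
    (hW : Measurable W) (hW0 : ∀ x, 0 ≤ W x) (hs : 0 ≤ s) :
    ∫⁻ x, ENNReal.ofReal (Real.exp (s * ∫ x', W x' ∂ν - (s * W x + s ^ 2 / 2 * s2))) ∂ν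
      ≤ 1 := by
  set c := ∫ x', W x' ∂ν
  have hint : Integrable (fun x => Real.exp (-s * (W x - c))) ν := by
    refine Integrable.of_bound (by fun_prop) (Real.exp (s * c))
      (Filter.Eventually.of_forall fun x => ?_)
    rw [Real.norm_eq_abs, Real.abs_exp, Real.exp_le_exp]
    nlinarith [mul_nonneg hs (hW0 x)]
  have hle : ∫ x, Real.exp (-s * (W x - c)) ∂ν ≤ Real.exp (s2 * (-s) ^ 2 / 2) :=
    (Real.log_le_iff_le_exp (integral_exp_pos hint)).mp (h.2 (-s))
  have heq (x : β) : Real.exp (s * c - (s * W x + s ^ 2 / 2 * s2))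
      = Real.exp (-s * (W x - c)) * Real.exp (-(s2 * (-s) ^ 2 / 2)) := by
    rw [← Real.exp_add]
    ring_nf
  simp_rw [heq]
  rw [← ofReal_integral_eq_lintegral_ofReal (hint.mul_const _)
    (Filter.Eventually.of_forall fun x => by positivity), integral_mul_const,
    ENNReal.ofReal_le_one, Real.exp_neg]
  exact mul_inv_le_one_of_le₀ hle (Real.exp_pos _).le

/-- Mutual-information bound on the excess minimum risk for a Markov
chain `Y → X → Z`: if the optimal estimator `f` of `Y` from `X` is such that `l(y, f(X))`
is `σ²(y)`-sub-Gaussian under `P_{X|Z=z}` and `P_{X|Z=z,Y=y}` for `P_{Y,Z}`-a.e. `(y,z)`,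
`E[σ²(Y)] < ∞`, and `I(X;Y) < ∞`, then
`L*_l(Y|Z) - L*_l(Y|X) ≤ √(2 E[σ²(Y)] (I(X;Y) - I(Z;Y)))`. -/
theorem excess_risk_mutualInfo_bound
    {Ω : Type*} [MeasurableSpace Ω] [StandardBorelSpace Ω] [Nonempty Ω]
    (μ : Measure Ω) [IsProbabilityMeasure μ] {p q r : ℕ}
    (Y : Ω → Fin p → ℝ) (X : Ω → Fin q → ℝ) (Z : Ω → Fin r → ℝ)
    (hY : Measurable Y) (hX : Measurable X) (hZ : Measurable Z)
    (l : (Fin p → ℝ) → (Fin p → ℝ) → ℝ)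
    (hl : Measurable fun yy : (Fin p → ℝ) × (Fin p → ℝ) => l yy.1 yy.2)
    (hl0 : ∀ y y', 0 ≤ l y y')
    (hMarkov : CondIndepFun (MeasurableSpace.comap X inferInstance) hX.comap_le Y Z μ)
    (f : (Fin q → ℝ) → Fin p → ℝ) (hf : Measurable f)
    (hopt : ∫⁻ ω, ENNReal.ofReal (l (Y ω) (f (X ω))) ∂μ = minRisk μ l Y X)
    (σ2 : (Fin p → ℝ) → ℝ) (hσ2meas : Measurable σ2) (hσ2nonneg : ∀ y, 0 ≤ σ2 y)
    (hσ2int : Integrable (fun ω => σ2 (Y ω)) μ)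
    (hSG : ∀ᵐ yz ∂(μ.map fun ω => (Y ω, Z ω)),
      SubGaussian (condDistrib X Z μ yz.2) (fun x => l yz.1 (f x)) (σ2 yz.1)
        ∧ SubGaussian (condDistrib X (fun ω => (Y ω, Z ω)) μ yz)
            (fun x => l yz.1 (f x)) (σ2 yz.1))
    (hfin : mutualInfo μ X Y ≠ ⊤) :
    minRisk μ l Y Z - minRisk μ l Y X
      ≤ ENNReal.ofReal (Real.sqrt (2 * (∫ ω, σ2 (Y ω) ∂μ)
          * (mutualInfo μ X Y - mutualInfo μ Z Y).toReal)) := by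
  have := Measure.isProbabilityMeasure_map (hZ.prodMk hY).aemeasurable (μ := μ)
  have := Measure.isProbabilityMeasure_map ((hZ.prodMk hY).prodMk hX).aemeasurable (μ := μ)
  rw [tsub_le_iff_left]
  by_cases hL : minRisk μ l Y X = ⊤
  · simp [hL]
  have hDI := mutualInfo_add_klDiv_le_of_condIndepFun hX hY hZ hMarkov
  set P := μ.map fun ω => ((Z ω, Y ω), X ω) with hP
  set Q := (μ.map fun ω => (Z ω, Y ω)) ⊗ₘ (condDistrib X Z μ).prodMkRight (Fin p → ℝ) with hQ
  have hKL : InformationTheory.klDiv P Q ≠ ⊤ :=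
    ne_top_of_le_ne_top hfin (le_add_self.trans hDI)
  have hIZ : mutualInfo μ Z Y ≠ ⊤ := ne_top_of_le_ne_top hfin (le_self_add.trans hDI)
  have hD : (InformationTheory.klDiv P Q).toReal
      ≤ (mutualInfo μ X Y - mutualInfo μ Z Y).toReal :=
    ENNReal.toReal_mono (ENNReal.sub_ne_top hfin) (ENNReal.le_sub_of_add_le_left hIZ hDI)
  have hlX : Measurable fun ω => l (Y ω) (f (X ω)) := hl.comp (hY.prodMk (hf.comp hX))
  have hlXi : Integrable (fun ω => l (Y ω) (f (X ω))) μ := by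
    refine ⟨hlX.aestronglyMeasurable, ?_⟩
    rw [hasFiniteIntegral_iff_ofReal (Filter.Eventually.of_forall fun ω => hl0 _ _), hopt]
    exact lt_top_iff_ne_top.mpr hL
  have hLX : minRisk μ l Y X = ENNReal.ofReal (∫ ω, l (Y ω) (f (X ω)) ∂μ) := by
    rw [← hopt, ofReal_integral_eq_lintegral_ofReal hlXi
      (Filter.Eventually.of_forall fun ω => hl0 _ _)]
  have hSGω : ∀ᵐ ω ∂μ, SubGaussian (condDistrib X Z μ (Z ω)) (fun x => l (Y ω) (f x))
      (σ2 (Y ω)) :=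
    (ae_of_ae_map (hY.prodMk hZ).aemeasurable hSG).mono fun ω h => h.1
  let m : (Fin r → ℝ) × (Fin p → ℝ) → ℝ := fun q => ∫ x, l q.2 (f x) ∂(condDistrib X Z μ q.1)
  have hl3 : Measurable fun q : ((Fin r → ℝ) × (Fin p → ℝ)) × (Fin q → ℝ) =>
      l q.1.2 (f q.2) :=
    hl.comp (measurable_fst.snd.prodMk (hf.comp measurable_snd))
  have hm : Measurable m :=
    (StronglyMeasurable.integral_kernel_prod_right'
      (κ := (condDistrib X Z μ).prodMkRight (Fin p → ℝ)) hl3.stronglyMeasurable).measurable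
  have hm0 : ∀ q, 0 ≤ m q := fun q => integral_nonneg fun x => hl0 _ _
  have hrisk : minRisk μ l Y Z ≤ ∫⁻ ω, ENNReal.ofReal (m (Z ω, Y ω)) ∂μ := by
    refine (minRisk_le_lintegral_kernel μ hl hY hZ (condDistrib X Z μ) hf).trans
      (lintegral_mono_ae (hSGω.mono fun ω h => ?_))
    exact (ofReal_integral_eq_lintegral_ofReal h.1
      (Filter.Eventually.of_forall fun x => hl0 _ _)).ge
  have hDV (s : ℝ) (hs : 0 < s) :
      ENNReal.ofReal s * ∫⁻ ω, ENNReal.ofReal (m (Z ω, Y ω)) ∂μ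
        ≤ ENNReal.ofReal (s * ∫ ω, l (Y ω) (f (X ω)) ∂μ + s ^ 2 * (∫ ω, σ2 (Y ω) ∂μ) / 2
          + (InformationTheory.klDiv P Q).toReal) := by
    let a : ((Fin r → ℝ) × (Fin p → ℝ)) × (Fin q → ℝ) → ℝ := fun w => s * m w.1
    let b : ((Fin r → ℝ) × (Fin p → ℝ)) × (Fin q → ℝ) → ℝ :=
      fun w => s * l w.1.2 (f w.2) + s ^ 2 / 2 * σ2 w.1.2
    have ha : Measurable a := (hm.comp measurable_fst).const_mul s
    have hb : Measurable b :=
      (hl3.const_mul s).add ((hσ2meas.comp measurable_fst.snd).const_mul _)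
    have hXYZ : Measurable fun ω => ((Z ω, Y ω), X ω) := by fun_prop
    have hbi : Integrable b P := by
      rw [hP, integrable_map_measure hb.aestronglyMeasurable hXYZ.aemeasurable]
      exact (hlXi.const_mul s).add (hσ2int.const_mul _)
    have hbint : ∫ w, b w ∂P
        = s * ∫ ω, l (Y ω) (f (X ω)) ∂μ + s ^ 2 * (∫ ω, σ2 (Y ω) ∂μ) / 2 := by
      rw [hP, integral_map hXYZ.aemeasurable hb.aestronglyMeasurable]
      simp only [b]
      rw [integral_add (hlXi.const_mul s) (hσ2int.const_mul _), integral_const_mul,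
        integral_const_mul]
      ring
    have hexp : ∫⁻ w, ENNReal.ofReal (Real.exp (a w - b w)) ∂Q ≤ 1 := by
      have hmeas : Measurable fun w => ENNReal.ofReal (Real.exp (a w - b w)) := by fun_prop
      rw [hQ, Measure.lintegral_compProd hmeas,
        lintegral_map (Measurable.lintegral_kernel_prod_right hmeas) (by fun_prop)]
      calc _ ≤ ∫⁻ _ω, 1 ∂μ := lintegral_mono_ae (hSGω.mono fun ω h => ?_)
        _ = 1 := by simp
      exact h.lintegral_exp_lower_le_one
        (hl.comp (measurable_const.prodMk hf)) (fun x => hl0 _ _) hs.le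
    have := lintegral_ofReal_le_integral_add_klDiv hKL ha hb
      (fun w => mul_nonneg hs.le (hm0 _)) hbi hexp
    rw [hbint, hP, lintegral_map ha.ennreal_ofReal hXYZ] at this
    refine le_trans (le_of_eq ?_) this
    rw [← lintegral_const_mul _ (by fun_prop)]
    exact lintegral_congr fun ω => (ENNReal.ofReal_mul hs.le).symm
  have hA : ∫⁻ ω, ENNReal.ofReal (m (Z ω, Y ω)) ∂μ ≠ ⊤ := fun h => by
    simpa [h] using hDV 1 one_pos
  have hV : 0 ≤ ∫ ω, σ2 (Y ω) ∂μ := integral_nonneg fun ω => hσ2nonneg _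
  have hL0 : 0 ≤ ∫ ω, l (Y ω) (f (X ω)) ∂μ := integral_nonneg fun ω => hl0 _ _
  have hfinal := le_sqrt_of_forall_mul_le
    (c := (∫⁻ ω, ENNReal.ofReal (m (Z ω, Y ω)) ∂μ).toReal - ∫ ω, l (Y ω) (f (X ω)) ∂μ)
    (D := (mutualInfo μ X Y - mutualInfo μ Z Y).toReal) hV ENNReal.toReal_nonneg fun s hs => by
      have h := ENNReal.toReal_le_of_le_ofReal (by positivity) (hDV s hs)
      rw [ENNReal.toReal_mul, ENNReal.toReal_ofReal hs.le] at h
      linarith [hD]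
  rw [hLX, ← ENNReal.ofReal_add hL0 (Real.sqrt_nonneg _)]
  refine hrisk.trans (ENNReal.le_ofReal_iff_toReal_le hA ?_ |>.mpr (by linarith))
  positivity
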